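/- Let Q be a quiver and P the path algebra of its double Q̄ over k. The k-linear map δ_{p,rt} : P → P ⊗ P defined on paths by δ_{p,rt}(a₁⋯aₙ) = Σ_{1 ≤ i < j ≤ n} −ω(a_i, a_j) · ((a_i)_t a_{i+1}⋯a_{j−1}) ⊗ ((a₁)_s a₁⋯a_{i−1} a_{j+1}⋯aₙ) is a (left) pre-Lie comultiplication on P. -/

import Mathlib

/-!
Statement 7: for a quiver `Q`, the map
`δ_{p,rt}(a₁⋯aₙ) = Σ_{i<j} −ω(a_i,a_j) ((a_i)_t a_{i+1}⋯a_{j−1}) ⊗ ((a₁)_s a₁⋯a_{i−1}a_{j+1}⋯aₙ)`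
is a (left) pre-Lie comultiplication on the path algebra `P` of the double quiver `Q̄`.
-/

open TensorProduct

noncomputable section

section PreLie

variable (k : Type*) [CommRing k] (g : Type*) [AddCommGroup g] [Module k g]

/-- `τ_{(12)}` on the triple tensor product `g ⊗ (g ⊗ g)`: `x⊗y⊗z ↦ y⊗x⊗z`. -/
def tau12 : g ⊗[k] (g ⊗[k] g) →ₗ[k] g ⊗[k] (g ⊗[k] g) :=
  (TensorProduct.assoc k g g g).toLinearMap ∘ₗ
    (LinearMap.rTensor g (TensorProduct.comm k g g).toLinearMap) ∘ₗ
    (TensorProduct.assoc k g g g).symm.toLinearMap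

variable {k g}

/-- `δ₀ : g → g ⊗ g` is a (left) pre-Lie comultiplication if
`(Id − τ_{(12)}) ∘ (δ₀ ⊗ Id − Id ⊗ δ₀) ∘ δ₀ = 0`. -/
def IsPreLieComul (δ : g →ₗ[k] g ⊗[k] g) : Prop :=
  (LinearMap.id - tau12 k g) ∘ₗ
      (((TensorProduct.assoc k g g g).toLinearMap ∘ₗ LinearMap.rTensor g δ)
        - LinearMap.lTensor g δ) ∘ₗ δ = 0

end PreLie

/-! ### Quivers, double quivers and paths

A quiver `Q` is given by a vertex type `I`, an arrow type `E`, and source/target maps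
`s t : E → I`. -/

/-- The arrows of the double quiver `Q̄ = Q ⊔ Q*`: `.inl e = e` and `.inr e = e*`. -/
abbrev Arr (E : Type*) := E ⊕ E

/-- The involution `a ↦ a*` on the arrows of the double quiver (with `(e*)* = e`). -/
def astar {E : Type*} : Arr E → Arr E
  | .inl e => .inr e
  | .inr e => .inl e

/-- The source `a_s` of an arrow of the double quiver. -/
def asrc {I E : Type*} (s t : E → I) : Arr E → I
  | .inl e => s e
  | .inr e => t e

/-- The target `a_t` of an arrow of the double quiver. -/
def atgt {I E : Type*} (s t : E → I) : Arr E → I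
  | .inl e => t e
  | .inr e => s e

open scoped Classical in
/-- The pairing `ω` on arrows of the double quiver: `ω(e,e*) = 1`, `ω(e*,e) = −1` for
`e ∈ Q`, and `ω(a,b) = 0` whenever `b ≠ a*`. -/
def omg (k : Type*) [CommRing k] {E : Type*} : Arr E → Arr E → k
  | .inl e, .inr e' => if e = e' then 1 else 0
  | .inr e, .inl e' => if e = e' then -1 else 0
  | _, _ => 0

/-- `IsPathFrom s t v l` means that `l` is a composable sequence of arrows of the double
quiver starting at the vertex `v`. -/
def IsPathFrom {I E : Type*} (s t : E → I) : I → List (Arr E) → Prop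
  | _, [] => True
  | v, a :: l => asrc s t a = v ∧ IsPathFrom s t (atgt s t a) l

/-- A path in the double quiver `Q̄`: a starting vertex together with a composable list
of arrows (the empty list gives the trivial path at the vertex). -/
structure QPath {I E : Type*} (s t : E → I) : Type _ where
  src : I
  arrows : List (Arr E)
  valid : IsPathFrom s t src arrows

variable (k : Type*) [CommRing k] {I E : Type*} (s t : E → I)

/-- `P`, the path algebra of the double quiver, as a `k`-module: the free `k`-module
with basis the paths in `Q̄`. -/
abbrev PathMod := QPath s t →₀ k

open scoped Classical in
/-- The basis vector of a path, or `0` if the data does not define a path. -/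
def mkP (v : I) (l : List (Arr E)) : PathMod k s t :=
  if h : IsPathFrom s t v l then Finsupp.single ⟨v, l, h⟩ (1 : k) else 0

/-- The summand of `δ_{p,rt}` for a pair of positions `i < j`:
`−ω(a_i,a_j) ((a_i)_t a_{i+1}⋯a_{j−1}) ⊗ ((a₁)_s a₁⋯a_{i−1} a_{j+1}⋯aₙ)`. -/
def dpTerm (p : QPath s t) (i j : ℕ) : PathMod k s t ⊗[k] PathMod k s t :=
  match p.arrows[i]?, p.arrows[j]? with
  | some a, some b =>
      (-(omg k a b)) •
        (mkP k s t (atgt s t a) ((p.arrows.drop (i+1)).take (j - i - 1)) ⊗ₜ[k]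
          mkP k s t p.src (p.arrows.take i ++ p.arrows.drop (j+1)))
  | _, _ => (0 : k) • (mkP k s t p.src [] ⊗ₜ[k] mkP k s t p.src [])

/-- The rooted pre-Lie comultiplication `δ_{p,rt}` on the path algebra `P`. -/
def deltaPrt : PathMod k s t →ₗ[k] PathMod k s t ⊗[k] PathMod k s t :=
  Finsupp.lift (PathMod k s t ⊗[k] PathMod k s t) k (QPath s t) fun p =>
    ∑ i ∈ Finset.range p.arrows.length, ∑ j ∈ Finset.range p.arrows.length,
      if i < j then dpTerm k s t p i j else (0 : k) • dpTerm k s t p i j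

section SumSplits

variable {α N N' : Type*} [AddCommMonoid N] [AddCommMonoid N']

/-- The sum of `F A a B` over all decompositions `l = A ++ a :: B`. -/
def sumSplits : (List α → α → List α → N) → List α → N
  | _, [] => 0
  | F, a :: l => F [] a l + sumSplits (fun A b B => F (a :: A) b B) l

theorem sumSplits_congr {l : List α} {F G : List α → α → List α → N}
    (h : ∀ A a B, l = A ++ a :: B → F A a B = G A a B) : sumSplits F l = sumSplits G l := by
  induction l generalizing F G with
  | nil => rfl
  | cons x l ih =>
    simp only [sumSplits]
    rw [h [] x l rfl, ih]
    intro A a B hl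
    exact h _ _ _ (by rw [hl]; rfl)

theorem sumSplits_zero (l : List α) : sumSplits (fun _ _ _ => (0 : N)) l = 0 := by
  induction l with
  | nil => rfl
  | cons x l ih => simp [sumSplits, ih]

theorem sumSplits_add (l : List α) (F G : List α → α → List α → N) :
    sumSplits (fun A a B => F A a B + G A a B) l = sumSplits F l + sumSplits G l := by
  induction l generalizing F G with
  | nil => simp [sumSplits]
  | cons x l ih => simp only [sumSplits, ih]; abel

theorem map_sumSplits {H : Type*} [FunLike H N N'] [AddMonoidHomClass H N N'] (f : H)
    (F : List α → α → List α → N) (l : List α) :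
    f (sumSplits F l) = sumSplits (fun A a B => f (F A a B)) l := by
  induction l generalizing F with
  | nil => simp [sumSplits]
  | cons x l ih => simp [sumSplits, ih]

theorem sumSplits_comm (l m : List α) (G : List α → α → List α → List α → α → List α → N) :
    sumSplits (fun A a B => sumSplits (fun C c D => G A a B C c D) m) l =
      sumSplits (fun C c D => sumSplits (fun A a B => G A a B C c D) l) m := by
  induction l generalizing G with
  | nil => simp [sumSplits, sumSplits_zero]
  | cons x l ih => simp only [sumSplits, ih, sumSplits_add]

/-- Splitting off a letter and then splitting the prefix is the same as splitting off a letter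
and then splitting the suffix. -/
theorem sumSplits_prefix (l : List α) (G : List α → α → List α → α → List α → N) :
    sumSplits (fun A a R => sumSplits (fun X c Y => G X c Y a R) A) l =
      sumSplits (fun X c R' => sumSplits (fun Y a R => G X c Y a R) R') l := by
  induction l generalizing G with
  | nil => rfl
  | cons x l ih => simp only [sumSplits, sumSplits_add, ih, zero_add]

theorem sumSplits_append (l m : List α) (F : List α → α → List α → N) :
    sumSplits F (l ++ m) =
      sumSplits (fun A a B => F A a (B ++ m)) l + sumSplits (fun A a B => F (l ++ A) a B) m := by
  induction l generalizing F with
  | nil => simp [sumSplits]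
  | cons x l ih => simp only [List.cons_append, sumSplits, ih]; abel

theorem sumSplits_eq_sum_range (l : List α) (F : List α → α → List α → N) (f : ℕ → N)
    (h : ∀ i (hi : i < l.length), f i = F (l.take i) l[i] (l.drop (i + 1))) :
    ∑ i ∈ Finset.range l.length, f i = sumSplits F l := by
  induction l generalizing F f with
  | nil => simp [sumSplits]
  | cons x l ih =>
    rw [List.length_cons, Finset.sum_range_succ', add_comm, sumSplits, h 0 (by simp),
      ih (fun A b B => F (x :: A) b B)]
    · simp
    · intro i hi
      rw [h (i + 1) (by simpa using hi)]
      simp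

theorem sum_range_ite_lt (n i : ℕ) (hi : i < n) (f : ℕ → N) :
    ∑ j ∈ Finset.range n, (if i < j then f j else 0) =
      ∑ j ∈ Finset.range (n - (i + 1)), f (i + 1 + j) := by
  obtain ⟨m, rfl⟩ := Nat.exists_eq_add_of_le (Nat.succ_le_of_lt hi)
  rw [Finset.sum_range_add, Finset.sum_eq_zero, zero_add]
  · rw [show i.succ + m - (i + 1) = m by omega]
    exact Finset.sum_congr rfl fun j _ => if_pos (by omega)
  · intro j hj
    rw [Finset.mem_range] at hj
    exact if_neg (by omega)

end SumSplits

section Paths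

variable {s t}

/-- The end vertex of a sequence of arrows starting at a given vertex. -/
def endVertex (s t : E → I) (v : I) (l : List (Arr E)) : I :=
  l.foldl (fun _ a => atgt s t a) v

theorem isPathFrom_append {v : I} {A B : List (Arr E)} :
    IsPathFrom s t v (A ++ B) ↔ IsPathFrom s t v A ∧ IsPathFrom s t (endVertex s t v A) B := by
  induction A generalizing v with
  | nil => simp [IsPathFrom, endVertex]
  | cons a A ih => simp [IsPathFrom, endVertex, ih, and_assoc]

theorem eq_astar_of_omg_ne_zero {a b : Arr E} (h : omg k a b ≠ 0) : b = astar a := by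
  rcases a with a | a <;> rcases b with b | b <;> simp_all [omg, astar]

theorem atgt_astar (a : Arr E) : atgt s t (astar a) = asrc s t a := by
  cases a <;> rfl

theorem isPathFrom_cut {v : I} {A B C : List (Arr E)} {a b : Arr E} (h : b = astar a)
    (hp : IsPathFrom s t v (A ++ a :: (B ++ b :: C))) :
    IsPathFrom s t (atgt s t a) B ∧ IsPathFrom s t v (A ++ C) := by
  subst h
  simp only [isPathFrom_append, IsPathFrom, atgt_astar] at hp ⊢
  obtain ⟨hA, ha, hB, -, hC⟩ := hp
  exact ⟨hB, hA, ha ▸ hC⟩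

end Paths

theorem deltaPrt_mkP {v : I} {l : List (Arr E)} (h : IsPathFrom s t v l) :
    deltaPrt k s t (mkP k s t v l) =
      sumSplits (fun A a R => sumSplits (fun B b C =>
        (-(omg k a b)) • (mkP k s t (atgt s t a) B ⊗ₜ[k] mkP k s t v (A ++ C))) R) l := by
  rw [mkP, dif_pos h, deltaPrt, Finsupp.lift_apply, Finsupp.sum_single_index (by simp), one_smul]
  refine sumSplits_eq_sum_range _ _ _ fun i hi => ?_
  simp only [zero_smul]
  rw [sum_range_ite_lt _ _ hi, ← List.length_drop]
  refine sumSplits_eq_sum_range _ _ _ fun j hj => ?_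
  have hj' : i + 1 + j < l.length := by simp at hj; omega
  simp only [dpTerm, List.getElem?_eq_getElem hi, List.getElem?_eq_getElem hj', List.getElem_drop,
    List.drop_drop]
  rw [show i + 1 + j - i - 1 = j by omega, add_assoc (i + 1) j 1]

theorem sumSplits_tmul {α M N : Type*} [AddCommMonoid M] [Module k M]
    [AddCommMonoid N] [Module k N]
    (F : List α → α → List α → M) (l : List α) (y : N) :
    sumSplits F l ⊗ₜ[k] y = sumSplits (fun A a B => F A a B ⊗ₜ[k] y) l :=
  map_sumSplits ((TensorProduct.mk k M N).flip y) F l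

theorem tmul_sumSplits {α M N : Type*} [AddCommMonoid M] [Module k M]
    [AddCommMonoid N] [Module k N]
    (F : List α → α → List α → N) (l : List α) (x : M) :
    x ⊗ₜ[k] sumSplits F l = sumSplits (fun A a B => x ⊗ₜ[k] F A a B) l :=
  map_sumSplits (TensorProduct.mk k M N x) F l

theorem smul_sumSplits {α M : Type*} [AddCommMonoid M] [Module k M]
    (F : List α → α → List α → M) (l : List α) (c : k) :
    c • sumSplits F l = sumSplits (fun A a B => c • F A a B) l :=
  map_sumSplits (LinearMap.lsmul k M c) F l

theorem tau12_tmul (x y z : PathMod k s t) :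
    tau12 k (PathMod k s t) (x ⊗ₜ[k] (y ⊗ₜ[k] z)) = y ⊗ₜ[k] (x ⊗ₜ[k] z) := by
  simp [tau12]

/-- The contribution to `(δ ⊗ Id) δ` and to `(Id ⊗ δ) δ` of nested pairs of arrows. -/
def nestedSum (v : I) (l : List (Arr E)) :
    PathMod k s t ⊗[k] (PathMod k s t ⊗[k] PathMod k s t) :=
  sumSplits (fun A a R => sumSplits (fun X c R' => sumSplits (fun Y d R'' =>
    sumSplits (fun Z b C => (omg k a b * omg k c d) •
      (mkP k s t (atgt s t c) Y ⊗ₜ[k] (mkP k s t (atgt s t a) (X ++ Z) ⊗ₜ[k]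
        mkP k s t v (A ++ C)))) R'') R') R) l

/-- The contribution to `(Id ⊗ δ) δ` of disjoint pairs of arrows, with the first pair cut out
first. -/
def disjointSum (v : I) (l : List (Arr E)) :
    PathMod k s t ⊗[k] (PathMod k s t ⊗[k] PathMod k s t) :=
  sumSplits (fun A a R => sumSplits (fun B b R' => sumSplits (fun X c R'' =>
    sumSplits (fun Y d Z => (omg k a b * omg k c d) •
      (mkP k s t (atgt s t a) B ⊗ₜ[k] (mkP k s t (atgt s t c) Y ⊗ₜ[k]
        mkP k s t v (A ++ X ++ Z)))) R'') R') R) l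

theorem rTensor_deltaPrt {v : I} {l : List (Arr E)} (h : IsPathFrom s t v l) :
    TensorProduct.assoc k _ _ _ (LinearMap.rTensor (PathMod k s t) (deltaPrt k s t)
      (deltaPrt k s t (mkP k s t v l))) = nestedSum k s t v l := by
  rw [deltaPrt_mkP k s t h]
  simp only [map_sumSplits]
  trans sumSplits (fun A a R => sumSplits (fun S b C => sumSplits (fun X c T =>
    sumSplits (fun Y d Z => (omg k a b * omg k c d) •
      (mkP k s t (atgt s t c) Y ⊗ₜ[k] (mkP k s t (atgt s t a) (X ++ Z) ⊗ₜ[k]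
        mkP k s t v (A ++ C)))) T) S) R) l
  · refine sumSplits_congr fun A a R hl => sumSplits_congr fun S b C hR => ?_
    subst hl hR
    by_cases hω : omg k a b = 0
    · simp [hω, sumSplits_zero]
    rw [map_smul, map_smul, LinearMap.rTensor_tmul,
      deltaPrt_mkP k s t (isPathFrom_cut (eq_astar_of_omg_ne_zero k hω) h).1]
    simp only [sumSplits_tmul, map_sumSplits, smul_sumSplits, TensorProduct.smul_tmul',
      TensorProduct.assoc_tmul, smul_smul, neg_mul_neg]
  · unfold nestedSum
    refine sumSplits_congr fun A a R _ => ?_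
    rw [sumSplits_prefix R (fun X c T b C => sumSplits (fun Y d Z => (omg k a b * omg k c d) •
      (mkP k s t (atgt s t c) Y ⊗ₜ[k] (mkP k s t (atgt s t a) (X ++ Z) ⊗ₜ[k]
        mkP k s t v (A ++ C)))) T)]
    refine sumSplits_congr fun X c R' _ => ?_
    rw [sumSplits_prefix R' (fun Y d Z b C => (omg k a b * omg k c d) •
      (mkP k s t (atgt s t c) Y ⊗ₜ[k] (mkP k s t (atgt s t a) (X ++ Z) ⊗ₜ[k]
        mkP k s t v (A ++ C))))]

theorem lTensor_deltaPrt {v : I} {l : List (Arr E)} (h : IsPathFrom s t v l) :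
    LinearMap.lTensor (PathMod k s t) (deltaPrt k s t) (deltaPrt k s t (mkP k s t v l)) =
      tau12 k _ (disjointSum k s t v l) + nestedSum k s t v l + disjointSum k s t v l := by
  rw [deltaPrt_mkP k s t h]
  simp only [map_sumSplits]
  trans sumSplits (fun A a R => sumSplits (fun B b C => sumSplits (fun X c T =>
    sumSplits (fun Y d Z => (omg k a b * omg k c d) •
      (mkP k s t (atgt s t a) B ⊗ₜ[k] (mkP k s t (atgt s t c) Y ⊗ₜ[k]
        mkP k s t v (X ++ Z)))) T) (A ++ C)) R) l
  · refine sumSplits_congr fun A a R hl => sumSplits_congr fun B b C hR => ?_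
    subst hl hR
    by_cases hω : omg k a b = 0
    · simp [hω, sumSplits_zero]
    rw [map_smul, LinearMap.lTensor_tmul,
      deltaPrt_mkP k s t (isPathFrom_cut (eq_astar_of_omg_ne_zero k hω) h).2]
    simp only [tmul_sumSplits, smul_sumSplits, TensorProduct.tmul_smul, smul_smul, neg_mul_neg]
  simp only [sumSplits_append, sumSplits_add]
  congr 1
  · congr 1
    · simp only [disjointSum, map_sumSplits, map_smul, tau12_tmul]
      trans sumSplits (fun A a R => sumSplits (fun X c T => sumSplits (fun Y d Z =>
        sumSplits (fun B b C => (omg k a b * omg k c d) •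
          (mkP k s t (atgt s t a) B ⊗ₜ[k] (mkP k s t (atgt s t c) Y ⊗ₜ[k]
            mkP k s t v (X ++ (Z ++ C))))) R) T) A) l
      · refine sumSplits_congr fun A a R _ => ?_
        rw [sumSplits_comm]
        refine sumSplits_congr fun X c T _ => ?_
        rw [sumSplits_comm]
      · rw [sumSplits_prefix l (fun X c T a R => sumSplits (fun Y d Z =>
          sumSplits (fun B b C => (omg k a b * omg k c d) •
            (mkP k s t (atgt s t a) B ⊗ₜ[k] (mkP k s t (atgt s t c) Y ⊗ₜ[k]
              mkP k s t v (X ++ (Z ++ C))))) R) T)]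
        refine sumSplits_congr fun X c R' _ => ?_
        rw [sumSplits_prefix R' (fun Y d Z a R =>
          sumSplits (fun B b C => (omg k a b * omg k c d) •
            (mkP k s t (atgt s t a) B ⊗ₜ[k] (mkP k s t (atgt s t c) Y ⊗ₜ[k]
              mkP k s t v (X ++ (Z ++ C))))) R)]
        simp only [List.append_assoc, mul_comm]
    · trans sumSplits (fun A a R => sumSplits (fun X c T => sumSplits (fun B b C =>
        sumSplits (fun Y d Z => (omg k a b * omg k c d) •
          (mkP k s t (atgt s t a) B ⊗ₜ[k] (mkP k s t (atgt s t c) (T ++ Y) ⊗ₜ[k]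
            mkP k s t v (X ++ Z)))) C) R) A) l
      · refine sumSplits_congr fun A a R _ => ?_
        rw [sumSplits_comm]
      · rw [sumSplits_prefix l (fun X c T a R => sumSplits (fun B b C =>
          sumSplits (fun Y d Z => (omg k a b * omg k c d) •
            (mkP k s t (atgt s t a) B ⊗ₜ[k] (mkP k s t (atgt s t c) (T ++ Y) ⊗ₜ[k]
              mkP k s t v (X ++ Z)))) C) R)]
        simp only [nestedSum, mul_comm]

theorem tau12_tau12 (x : PathMod k s t ⊗[k] (PathMod k s t ⊗[k] PathMod k s t)) :
    tau12 k _ (tau12 k _ x) = x := by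
  simp only [tau12, LinearMap.comp_apply, LinearEquiv.coe_coe, LinearEquiv.symm_apply_apply,
    ← LinearMap.rTensor_comp_apply]
  simp

theorem comp_sub_apply_eq_zero {k g : Type*} [CommRing k] [AddCommGroup g] [Module k g]
    (δ : g →ₗ[k] g ⊗[k] g) (x : g)
    (h : TensorProduct.assoc k g g g (LinearMap.rTensor g δ (δ x)) +
        tau12 k g (LinearMap.lTensor g δ (δ x)) =
      LinearMap.lTensor g δ (δ x) +
        tau12 k g (TensorProduct.assoc k g g g (LinearMap.rTensor g δ (δ x)))) :
    ((LinearMap.id - tau12 k g) ∘ₗ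
      (((TensorProduct.assoc k g g g).toLinearMap ∘ₗ LinearMap.rTensor g δ)
        - LinearMap.lTensor g δ) ∘ₗ δ) x = 0 := by
  simp only [LinearMap.comp_apply, LinearMap.sub_apply, LinearMap.id_apply, LinearEquiv.coe_coe,
    map_sub, sub_sub_sub_eq]
  rw [← sub_eq_zero] at h
  rw [← h]
  abel

/-- `δ_{p,rt}` is a (left) pre-Lie comultiplication on `P`. -/
theorem deltaPrt_isPreLieComul : IsPreLieComul (deltaPrt k s t) := by
  refine Finsupp.lhom_ext' fun p => LinearMap.ext_ring ?_
  have hp : Finsupp.single p (1 : k) = mkP k s t p.src p.arrows := by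
    rw [mkP, dif_pos p.valid]
  rw [LinearMap.comp_apply, Finsupp.lsingle_apply, hp]
  refine comp_sub_apply_eq_zero _ _ ?_
  rw [rTensor_deltaPrt k s t p.valid, lTensor_deltaPrt k s t p.valid]
  simp only [map_add, tau12_tau12]
  abel

end
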